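/- Let (X, σ_X) be a one-sided subshift with the weak specification property, 𝓕 = {log f_n} an almost additive sequence of continuous functions on X, and ν ∈ M(X, σ_X) an invariant Gibbs measure for 𝓕 with constants P ∈ ℝ and C_0 > 0, i.e. C_0^{-1} ≤ ν[x_1…x_n]/(e^{-nP} f_n(x)) ≤ C_0 for all x ∈ X and n ∈ ℕ. Suppose that for every x ∈ X the limit r(x) := lim_{n→∞} log(ν[x_1…x_n]/ν[x_2…x_n]) + P exists in ℝ. Then r is a bounded Borel measurable function on X, for every μ ∈ M(X, σ_X) one has lim_{n→∞} (1/n) ∫ log f_n dμ = lim_{n→∞} (1/n) ∫ log(ν[x_1…x_n] e^{nP}) dμ(x) = ∫ r dμ, and ν is an invariant Gibbs measure for r. -/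

import Mathlib

open MeasureTheory Filter Topology

noncomputable section

/-- The one-sided shift map. -/
def shift {A : Type*} : (ℕ → A) → ℕ → A := fun x i => x (i + 1)

/-- A finite word appears in some point of `X`. -/
def AppearsIn {A : Type*} (X : Set (ℕ → A)) (w : List A) : Prop :=
  ∃ x ∈ X, ∃ m : ℕ, ∀ i : Fin w.length, x (m + i) = w.get i

/-- `X` is a (one-sided) subshift: a closed, shift-invariant set. -/
def IsSubshift {A : Type*} [TopologicalSpace A] (X : Set (ℕ → A)) : Prop :=
  IsClosed X ∧ shift '' X ⊆ X

/-- The weak specification property. -/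
def WeakSpec {A : Type*} (X : Set (ℕ → A)) : Prop :=
  ∃ p : ℕ, ∀ u v : List A, AppearsIn X u → AppearsIn X v →
    ∃ w : List A, w.length ≤ p ∧ AppearsIn X (u ++ w ++ v)

/-- The cylinder set `[x_1 … x_n]` inside `X`. -/
def cyl {A : Type*} (X : Set (ℕ → A)) (x : ℕ → A) (n : ℕ) : Set (ℕ → A) :=
  {z ∈ X | ∀ i < n, z i = x i}

/-- Birkhoff sum `(S_n g)(x)`. -/
def birk {A : Type*} (g : (ℕ → A) → ℝ) (n : ℕ) (x : ℕ → A) : ℝ :=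
  ∑ i ∈ Finset.range n, g (shift^[i] x)

/-- `μ` is a shift-invariant Borel probability measure concentrated on `X`,
i.e. an element of `M(X, σ_X)`. -/
def IsInvariantOn {A : Type*} [MeasurableSpace A] (μ : Measure (ℕ → A))
    (X : Set (ℕ → A)) : Prop :=
  IsProbabilityMeasure μ ∧ μ X = 1 ∧
    ∀ B : Set (ℕ → A), MeasurableSet B → μ (shift ⁻¹' B) = μ B

/-- `μ` is a Gibbs measure for the sequence `𝓕 = {log f_n}`. -/
def GibbsSeq {A : Type*} [MeasurableSpace A] (X : Set (ℕ → A))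
    (f : ℕ → (ℕ → A) → ℝ) (μ : Measure (ℕ → A)) : Prop :=
  ∃ P C : ℝ, 0 < C ∧ ∀ x ∈ X, ∀ n : ℕ, 1 ≤ n →
    C⁻¹ ≤ (μ (cyl X x n)).toReal / (Real.exp (-(n : ℝ) * P) * f n x) ∧
    (μ (cyl X x n)).toReal / (Real.exp (-(n : ℝ) * P) * f n x) ≤ C

/-- `μ` is a weak Gibbs measure for the sequence `𝓕 = {log f_n}`. -/
def WeakGibbsSeq {A : Type*} [MeasurableSpace A] (X : Set (ℕ → A))
    (f : ℕ → (ℕ → A) → ℝ) (μ : Measure (ℕ → A)) : Prop :=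
  ∃ P : ℝ, ∃ C : ℕ → ℝ, (∀ n : ℕ, 1 ≤ n → 0 < C n) ∧
    Tendsto (fun n : ℕ => Real.log (C n) / n) atTop (𝓝 0) ∧
    ∀ x ∈ X, ∀ n : ℕ, 1 ≤ n →
      (C n)⁻¹ ≤ (μ (cyl X x n)).toReal / (Real.exp (-(n : ℝ) * P) * f n x) ∧
      (μ (cyl X x n)).toReal / (Real.exp (-(n : ℝ) * P) * f n x) ≤ C n

/-- `μ` is a Gibbs measure for the (Borel measurable) function `g`. -/
def GibbsFun {A : Type*} [MeasurableSpace A] (X : Set (ℕ → A))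
    (g : (ℕ → A) → ℝ) (μ : Measure (ℕ → A)) : Prop :=
  GibbsSeq X (fun n x => Real.exp (birk g n x)) μ

/-- `μ` is a weak Gibbs measure for the (Borel measurable) function `g`. -/
def WeakGibbsFun {A : Type*} [MeasurableSpace A] (X : Set (ℕ → A))
    (g : (ℕ → A) → ℝ) (μ : Measure (ℕ → A)) : Prop :=
  WeakGibbsSeq X (fun n x => Real.exp (birk g n x)) μ

/-- The sequence `{log f_n}` is almost additive on `X` with constant `C`. -/
def AAOn {A : Type*} (X : Set (ℕ → A)) (f : ℕ → (ℕ → A) → ℝ) (C : ℝ) : Prop :=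
  ∀ x ∈ X, ∀ n m : ℕ, 1 ≤ n → 1 ≤ m →
    Real.exp (-C) * (f n x * f m (shift^[n] x)) ≤ f (n + m) x ∧
    f (n + m) x ≤ Real.exp C * (f n x * f m (shift^[n] x))

/-- The sequence `{log f_n}` is weakly almost additive on `X`. -/
def WeakAAOn {A : Type*} (X : Set (ℕ → A)) (f : ℕ → (ℕ → A) → ℝ) : Prop :=
  ∃ C : ℕ → ℝ, (∀ n : ℕ, 1 ≤ n → 0 < C n) ∧
    Tendsto (fun n : ℕ => C n / n) atTop (𝓝 0) ∧
    ∀ x ∈ X, ∀ n m : ℕ, 1 ≤ n → 1 ≤ m →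
      Real.exp (-(C n)) * (f n x * f m (shift^[n] x)) ≤ f (n + m) x ∧
      f (n + m) x ≤ Real.exp (C n) * (f n x * f m (shift^[n] x))

def Lcyl {k : ℕ} (X : Set (ℕ → Fin k)) (ν : Measure (ℕ → Fin k)) (P : ℝ) (n : ℕ)
    (x : ℕ → Fin k) : ℝ := Real.log (ν (cyl X x n)).toReal + n * P

theorem shift_meas {k : ℕ} : Measurable (shift : (ℕ → Fin k) → ℕ → Fin k) :=
  measurable_pi_lambda _ fun i => measurable_pi_apply (i + 1)

theorem cyl_meas {k : ℕ} (X : Set (ℕ → Fin k)) (ν : Measure (ℕ → Fin k)) (n : ℕ) :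
    Measurable (fun x => (ν (cyl X x n)).toReal) := by
  have h : (fun x => (ν (cyl X x n)).toReal) =
      (fun w : Fin n → Fin k => (ν {z ∈ X | ∀ i : Fin n, z i = w i}).toReal) ∘
        (fun x : ℕ → Fin k => fun i : Fin n => x i) := by
    funext x
    simp only [Function.comp, cyl]
    congr 2
    ext z
    simp [Fin.forall_iff]
  rw [h]
  exact (measurable_of_finite _).comp
    (measurable_pi_lambda _ fun i => measurable_pi_apply (i : ℕ))

theorem iter_mem {k : ℕ} {X : Set (ℕ → Fin k)} (hX : IsSubshift X) {x : ℕ → Fin k}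
    (hx : x ∈ X) (n : ℕ) : shift^[n] x ∈ X := by
  induction n with
  | zero => exact hx
  | succ n ih =>
    rw [Function.iterate_succ_apply']
    exact hX.2 ⟨_, ih, rfl⟩

theorem int_limit {k : ℕ} (X : Set (ℕ → Fin k)) (hX : IsSubshift X)
    (r : (ℕ → Fin k) → ℝ) (hm : Measurable (fun x : X => r ↑x))
    (B : ℝ) (hB : ∀ x ∈ X, |r x| ≤ B)
    (μ : Measure (ℕ → Fin k)) (hμ : IsInvariantOn μ X)
    (h : ℕ → (ℕ → Fin k) → ℝ) (K : ℝ)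
    (hh : ∀ n, 1 ≤ n → AEStronglyMeasurable (h n) μ)
    (hK : ∀ n, 1 ≤ n → ∀ x ∈ X, |h n x - birk r n x| ≤ K) :
    Tendsto (fun n : ℕ => (1 / (n : ℝ)) * ∫ x, h n x ∂μ) atTop (𝓝 (∫ x, r x ∂μ)) := by
  obtain ⟨hp, hμX, hinv⟩ := hμ
  have hXm : MeasurableSet X := hX.1.measurableSet
  have hae : ∀ᵐ x ∂μ, x ∈ X := (mem_ae_iff_prob_eq_one hXm).2 hμX
  have hr : Measurable (X.indicator r) := by
    have := (MeasurableEmbedding.subtype_coe hXm).measurable_extend hm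
      (measurable_const (a := (0:ℝ)))
    convert this using 1
    funext x
    by_cases hx : x ∈ X
    · rw [Set.indicator_of_mem hx]
      exact (Subtype.val_injective.extend_apply (fun x : X => r x) _ ⟨x, hx⟩).symm
    · rw [Set.indicator_of_notMem hx, Function.extend_apply']
      rintro ⟨y, rfl⟩
      exact hx y.2
  have hra : AEStronglyMeasurable r μ :=
    ⟨X.indicator r, hr.stronglyMeasurable, by
      filter_upwards [hae] with x hx
      rw [Set.indicator_of_mem hx]⟩
  have hri : Integrable r μ := Integrable.of_bound hra B (by
    filter_upwards [hae] with x hx using hB x hx)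
  have hmp : MeasurePreserving shift μ μ := ⟨shift_meas, by
    ext s hs
    rw [Measure.map_apply shift_meas hs, hinv s hs]⟩
  have hbi : ∀ i, Integrable (fun x => r (shift^[i] x)) μ := fun i =>
    (hmp.iterate i).integrable_comp_of_integrable hri
  have hbv : ∀ i, ∫ x, r (shift^[i] x) ∂μ = ∫ x, r x ∂μ := by
    intro i
    have h1 := (hmp.iterate i)
    rw [← integral_map (f := r) h1.measurable.aemeasurable (by rw [h1.map_eq]; exact hra),
      h1.map_eq]
  have hBI : ∀ n, Integrable (birk r n) μ := fun n => by
    have := integrable_finsetSum (Finset.range n) (fun i _ => hbi i)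
    exact this
  have hBV : ∀ n : ℕ, ∫ x, birk r n x ∂μ = n * ∫ x, r x ∂μ := fun n => by
    simp only [birk]
    rw [integral_finsetSum _ (fun i _ => hbi i)]
    simp [hbv]
  have key : ∀ n : ℕ, 1 ≤ n → |∫ x, h n x ∂μ - n * ∫ x, r x ∂μ| ≤ K := by
    intro n hn
    have hb : ∀ᵐ x ∂μ, ‖h n x - birk r n x‖ ≤ K := by
      filter_upwards [hae] with x hx using hK n hn x hx
    have hd : Integrable (fun x => h n x - birk r n x) μ :=
      Integrable.of_bound ((hh n hn).sub (hBI n).1) K hb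
    have hi : Integrable (h n) μ := by
      have := hd.add (hBI n)
      refine this.congr (ae_of_all _ fun x => ?_)
      simp
    rw [← hBV, ← integral_sub hi (hBI n)]
    have := norm_integral_le_of_norm_le_const hb
    simpa using this
  rw [tendsto_iff_norm_sub_tendsto_zero]
  refine squeeze_zero' (Eventually.of_forall fun _ => norm_nonneg _) (g := fun n : ℕ => K / n) ?_
    (tendsto_const_div_atTop_nhds_zero_nat K)
  filter_upwards [eventually_ge_atTop 1] with n hn
  have hn0 : (0:ℝ) < n := by exact_mod_cast hn
  have : (1 / (n : ℝ)) * ∫ x, h n x ∂μ - ∫ x, r x ∂μ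
      = (∫ x, h n x ∂μ - n * ∫ x, r x ∂μ) / n := by
    field_simp
  rw [this, Real.norm_eq_abs, abs_div, abs_of_pos hn0]
  gcongr
  exact key n hn

/-- Theorem `cando1` (i): for an almost additive `𝓕` with invariant
Gibbs measure `ν`, if `r(x) = lim log(ν[x_1…x_n]/ν[x_2…x_n]) + P` exists everywhere,
then `r` is bounded Borel measurable, the limits of `(1/n)∫ log f_n dμ` and of
`(1/n)∫ log(ν[x_1…x_n]e^{nP}) dμ` both equal `∫ r dμ` for every invariant `μ`, and `ν`
is an invariant Gibbs measure for `r`. -/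
theorem stmt_8 {k : ℕ} (X : Set (ℕ → Fin k))
    (hX : IsSubshift X) (hspec : WeakSpec X)
    (f : ℕ → (ℕ → Fin k) → ℝ)
    (hfc : ∀ n : ℕ, 1 ≤ n → ContinuousOn (f n) X)
    (hfpos : ∀ n : ℕ, 1 ≤ n → ∀ x ∈ X, 0 < f n x)
    (hAA : ∃ C : ℝ, 0 < C ∧ AAOn X f C)
    (ν : Measure (ℕ → Fin k)) (hν : IsInvariantOn ν X)
    (P C₀ : ℝ) (hC₀ : 0 < C₀)
    (hGibbs : ∀ x ∈ X, ∀ n : ℕ, 1 ≤ n →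
      C₀⁻¹ ≤ (ν (cyl X x n)).toReal / (Real.exp (-(n : ℝ) * P) * f n x) ∧
      (ν (cyl X x n)).toReal / (Real.exp (-(n : ℝ) * P) * f n x) ≤ C₀)
    (r : (ℕ → Fin k) → ℝ)
    (hr : ∀ x ∈ X, Tendsto (fun n : ℕ =>
      Real.log ((ν (cyl X x (n + 2))).toReal / (ν (cyl X (shift x) (n + 1))).toReal) + P)
      atTop (𝓝 (r x))) :
    Measurable (fun x : X => r ↑x) ∧
    (∃ B : ℝ, ∀ x ∈ X, |r x| ≤ B) ∧
    (∀ μ : Measure (ℕ → Fin k), IsInvariantOn μ X →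
      Tendsto (fun n : ℕ => (1 / (n : ℝ)) * ∫ x, Real.log (f n x) ∂μ) atTop
        (𝓝 (∫ x, r x ∂μ)) ∧
      Tendsto (fun n : ℕ => (1 / (n : ℝ)) *
          ∫ x, Real.log ((ν (cyl X x n)).toReal * Real.exp ((n : ℝ) * P)) ∂μ) atTop
        (𝓝 (∫ x, r x ∂μ))) ∧
    GibbsFun X r ν := by
  obtain ⟨C, hC, hAA⟩ := hAA
  have hpos : ∀ x ∈ X, ∀ n, 1 ≤ n → 0 < (ν (cyl X x n)).toReal := by
    intro x hx n hn
    have h1 := (hGibbs x hx n hn).1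
    have h2 : 0 < Real.exp (-(n : ℝ) * P) * f n x :=
      mul_pos (Real.exp_pos _) (hfpos n hn x hx)
    rw [le_div_iff₀ h2] at h1
    exact lt_of_lt_of_le (mul_pos (inv_pos.2 hC₀) h2) h1
  set c := Real.log C₀ with hc
  have hLf : ∀ x ∈ X, ∀ n, 1 ≤ n → |Lcyl X ν P n x - Real.log (f n x)| ≤ c := by
    intro x hx n hn
    obtain ⟨h1, h2⟩ := hGibbs x hx n hn
    have hf := hfpos n hn x hx
    have hN := hpos x hx n hn
    have e : Real.log ((ν (cyl X x n)).toReal / (Real.exp (-(n : ℝ) * P) * f n x))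
        = Lcyl X ν P n x - Real.log (f n x) := by
      rw [Real.log_div hN.ne' (by positivity), Real.log_mul (by positivity) hf.ne', Real.log_exp,
        Lcyl]
      ring
    have g1 := Real.log_le_log (by positivity) h1
    have g2 := Real.log_le_log (by positivity) h2
    rw [e] at g1 g2
    rw [Real.log_inv] at g1
    exact abs_le.2 ⟨g1, g2⟩
  have hff : ∀ x ∈ X, ∀ n m, 1 ≤ n → 1 ≤ m →
      |Real.log (f (n + m) x) - Real.log (f n x) - Real.log (f m (shift^[n] x))| ≤ C := by
    intro x hx n m hn hm
    obtain ⟨h1, h2⟩ := hAA x hx n m hn hm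
    have a := hfpos n hn x hx
    have b := hfpos m hm _ (iter_mem hX hx n)
    have d := hfpos (n + m) (by omega) x hx
    have g1 := Real.log_le_log (by positivity) h1
    have g2 := Real.log_le_log (by positivity) h2
    rw [Real.log_mul (by positivity) (by positivity), Real.log_mul a.ne' b.ne', Real.log_exp]
      at g1 g2
    rw [abs_le]
    constructor <;> linarith
  set K := C + 3 * c with hK
  have hLL : ∀ x ∈ X, ∀ n m, 1 ≤ n → 1 ≤ m →
      |Lcyl X ν P (n + m) x - Lcyl X ν P m (shift^[n] x) - Lcyl X ν P n x| ≤ K := by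
    intro x hx n m hn hm
    have h0 := abs_le.1 (hff x hx n m hn hm)
    have h1 := abs_le.1 (hLf x hx n hn)
    have h2 := abs_le.1 (hLf _ (iter_mem hX hx n) m hm)
    have h3 := abs_le.1 (hLf x hx (n + m) (by omega))
    rw [abs_le]
    constructor <;> linarith [h0.1, h0.2, h1.1, h1.2, h2.1, h2.2, h3.1, h3.2]
  have hr' : ∀ x ∈ X, Tendsto (fun n : ℕ => Lcyl X ν P (n + 2) x - Lcyl X ν P (n + 1) (shift x))
      atTop (𝓝 (r x)) := by
    intro x hx
    refine (hr x hx).congr fun n => ?_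
    rw [Real.log_div (hpos x hx (n + 2) (by omega)).ne'
      (hpos (shift x) (iter_mem hX hx 1) (n + 1) (by omega)).ne', Lcyl, Lcyl]
    push_cast
    ring
  have htel : ∀ x ∈ X, ∀ m : ℕ, Tendsto (fun n : ℕ =>
      Lcyl X ν P (m + (n + 1)) x - Lcyl X ν P (n + 1) (shift^[m] x)) atTop
        (𝓝 (birk r m x)) := by
    intro x hx m
    induction m with
    | zero => simp [birk]
    | succ m ih =>
      have h1 := (ih.comp (tendsto_add_atTop_nat 1)).add (hr' _ (iter_mem hX hx m))
      have e : birk r (m + 1) x = birk r m x + r (shift^[m] x) := by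
        simp [birk, Finset.sum_range_succ]
      rw [e]
      refine h1.congr fun n => ?_
      rw [Function.iterate_succ_apply']
      simp only [Function.comp]
      rw [show m + (n + 1 + 1) = m + 1 + (n + 1) by ring]
      ring
  have hbL : ∀ x ∈ X, ∀ m, 1 ≤ m → |birk r m x - Lcyl X ν P m x| ≤ K := by
    intro x hx m hm
    have h1 := ((htel x hx m).sub_const (Lcyl X ν P m x)).abs
    exact le_of_tendsto' h1 fun n => hLL x hx m (n + 1) hm (by omega)
  have hmeas : Measurable (fun x : X => r ↑x) := by
    refine measurable_of_tendsto_metrizable (f := fun n (x : X) =>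
      Real.log ((ν (cyl X x (n + 2))).toReal / (ν (cyl X (shift x) (n + 1))).toReal) + P)
      (fun n => ?_) (tendsto_pi_nhds.2 fun x => hr x x.2)
    have h1 := (cyl_meas X ν (n + 2)).comp (measurable_subtype_coe (p := (· ∈ X)))
    have h2 := ((cyl_meas X ν (n + 1)).comp shift_meas).comp
      (measurable_subtype_coe (p := (· ∈ X)))
    exact (Real.measurable_log.comp (h1.div h2)).add_const P
  have hcomp : IsCompact X := hX.1.isCompact
  obtain ⟨D, hD⟩ := hcomp.exists_bound_of_continuousOn
    ((hfc 1 le_rfl).log fun x hx => (hfpos 1 le_rfl x hx).ne')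
  have hbd : ∀ x ∈ X, |r x| ≤ K + c + D := by
    intro x hx
    have h1 := abs_le.1 (hbL x hx 1 le_rfl)
    have h2 := abs_le.1 (hLf x hx 1 le_rfl)
    have h3 := abs_le.1 (hD x hx)
    have e : birk r 1 x = r x := by simp [birk]
    rw [e] at h1
    rw [abs_le]
    constructor <;> linarith [h1.1, h1.2, h2.1, h2.2, h3.1, h3.2]
  refine ⟨hmeas, ⟨_, hbd⟩, fun μ hμ => ⟨?_, ?_⟩, ?_⟩
  · refine int_limit X hX r hmeas _ hbd μ hμ (fun n x => Real.log (f n x)) (K + c) ?_ ?_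
    · intro n hn
      have := hμ.1
      have hXm : MeasurableSet X := hX.1.measurableSet
      have hae : ∀ᵐ x ∂μ, x ∈ X := (mem_ae_iff_prob_eq_one hXm).2 hμ.2.1
      have h1 := ((hfc n hn).log fun x hx => (hfpos n hn x hx).ne').aestronglyMeasurable
        (μ := μ) hXm
      rwa [Measure.restrict_eq_self_of_ae_mem hae] at h1
    · intro n hn x hx
      have h1 := abs_le.1 (hbL x hx n hn)
      have h2 := abs_le.1 (hLf x hx n hn)
      rw [abs_le]
      constructor <;> linarith [h1.1, h1.2, h2.1, h2.2]
  · refine int_limit X hX r hmeas _ hbd μ hμ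
      (fun n x => Real.log ((ν (cyl X x n)).toReal * Real.exp ((n : ℝ) * P))) K ?_ ?_
    · intro n hn
      exact (Real.measurable_log.comp ((cyl_meas X ν n).mul_const _)).aestronglyMeasurable
    · intro n hn x hx
      have h1 := hbL x hx n hn
      rw [abs_sub_comm] at h1
      rwa [Real.log_mul (hpos x hx n hn).ne' (Real.exp_pos _).ne', Real.log_exp]
  · refine ⟨P, Real.exp K, Real.exp_pos _, fun x hx n hn => ?_⟩
    have h1 := abs_le.1 (hbL x hx n hn)
    have e : (ν (cyl X x n)).toReal / (Real.exp (-(n : ℝ) * P) * Real.exp (birk r n x))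
        = Real.exp (Lcyl X ν P n x - birk r n x) := by
      rw [Lcyl, Real.exp_sub, Real.exp_add, Real.exp_log (hpos x hx n hn), neg_mul, Real.exp_neg]
      field_simp
    simp only [e]
    rw [← Real.exp_neg, Real.exp_le_exp, Real.exp_le_exp]
    constructor <;> linarith [h1.1, h1.2]
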